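/- Let G be a P4-sparse graph and let A be a set of four vertices inducing a P4 in G. Then there do not exist a vertex v in T(A) ∪ P(A) and distinct vertices x, y in I(A) such that the edges of G among {v, x, y} are exactly vy and xy. -/

import Mathlib

open SimpleGraph

variable {V : Type*}

/-- `a, b, c, d` form an induced path on four vertices (a `P4`) in `G`. -/
def IsP4 (G : SimpleGraph V) (a b c d : V) : Prop :=
  a ≠ b ∧ a ≠ c ∧ a ≠ d ∧ b ≠ c ∧ b ≠ d ∧ c ≠ d ∧
    G.Adj a b ∧ G.Adj b c ∧ G.Adj c d ∧ ¬G.Adj a c ∧ ¬G.Adj a d ∧ ¬G.Adj b d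

/-- A graph is a cograph if it contains no induced `P4`. -/
def IsCograph (G : SimpleGraph V) : Prop :=
  ∀ a b c d : V, ¬IsP4 G a b c d

/-- The vertex set `A` induces a `P4` in `G`. -/
def InducesP4 (G : SimpleGraph V) (A : Set V) : Prop :=
  ∃ a b c d : V, IsP4 G a b c d ∧ A = {a, b, c, d}

/-- `G` is `P4`-sparse: every set of five vertices induces at most one `P4`. -/
def P4Sparse (G : SimpleGraph V) : Prop :=
  ∀ s : Set V, s.ncard = 5 →
    ∀ A B : Set V, A ⊆ s → B ⊆ s → InducesP4 G A → InducesP4 G B → A = B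

/-- `F` is a deletion set of `G`: a set of edges of `G` whose removal yields a cograph. -/
def IsDeletionSet (G : SimpleGraph V) (F : Set (Sym2 V)) : Prop :=
  F ⊆ G.edgeSet ∧ IsCograph (G.deleteEdges F)

/-- The minimum size of a deletion set of `G`. -/
noncomputable def cographAlpha (G : SimpleGraph V) : ℕ :=
  sInf {n | ∃ F : Set (Sym2 V), IsDeletionSet G F ∧ F.ncard = n}

/-- `T(A)`: the vertices outside `A` adjacent to all vertices of `A`. -/
def tSet (G : SimpleGraph V) (A : Set V) : Set V :=
  {v | v ∉ A ∧ ∀ a ∈ A, G.Adj v a}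

/-- `I(A)`: the vertices outside `A` adjacent to no vertex of `A`. -/
def iSet (G : SimpleGraph V) (A : Set V) : Set V :=
  {v | v ∉ A ∧ ∀ a ∈ A, ¬G.Adj v a}

/-- `P(A)`: the vertices `v` outside `A` with `1 ≤ |N(v) ∩ A| ≤ 3`. -/
def pSet (G : SimpleGraph V) (A : Set V) : Set V :=
  {v | v ∉ A ∧ 1 ≤ (G.neighborSet v ∩ A).ncard ∧ (G.neighborSet v ∩ A).ncard ≤ 3}

/-- In a `P4`-sparse graph, adding a vertex `e` to a `P4` creates no `P4` through `e`. -/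
theorem P4Sparse.notMem_of_isP4 {G : SimpleGraph V} (hG : P4Sparse G) {a b c d e : V}
    {B : Set V} (hP4 : IsP4 G a b c d) (he : e ∉ ({a, b, c, d} : Set V))
    (hB : InducesP4 G B) (hsub : B ⊆ insert e {a, b, c, d}) : e ∉ B := by
  have hcard : (insert e {a, b, c, d} : Set V).ncard = 5 := by
    obtain ⟨hab, hac, had, hbc, hbd, hcd, -⟩ := hP4
    rw [Set.ncard_insert_of_notMem he, Set.ncard_insert_of_notMem (by simp [*]),
      Set.ncard_insert_of_notMem (by simp [*]), Set.ncard_pair hcd]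
  rwa [← hG _ hcard _ _ (Set.subset_insert _ _) hsub ⟨a, b, c, d, hP4, rfl⟩ hB]

theorem IsP4.reverse {G : SimpleGraph V} {a b c d : V} (h : IsP4 G a b c d) :
    IsP4 G d c b a := by
  simp only [IsP4, G.adj_comm, ne_comm] at h ⊢
  tauto

/-- In a `P4`-sparse graph, a vertex outside a `P4` is not adjacent to exactly one of its
vertices, if that vertex is one of the first two. -/
theorem P4Sparse.exists_adj_ne {G : SimpleGraph V} (hG : P4Sparse G) {a b c d v p : V}
    (hP4 : IsP4 G a b c d) (hv : v ∉ ({a, b, c, d} : Set V)) (hp : p = a ∨ p = b)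
    (hvp : G.Adj v p) : ∃ q ∈ ({a, b, c, d} : Set V), q ≠ p ∧ G.Adj v q := by
  by_contra! hno
  have hmem := hv
  simp only [Set.mem_insert_iff, Set.mem_singleton_iff, not_or] at hmem
  obtain ⟨hva, hvb, hvc, hvd⟩ := hmem
  obtain ⟨hab, hac, had, hbc, hbd, hcd, eab, ebc, ecd, nac, nad, nbd⟩ := id hP4
  rcases hp with rfl | rfl
  · refine hG.notMem_of_isP4 hP4 hv (B := {v, p, b, c}) ⟨v, p, b, c, ?_, rfl⟩ ?_ (by simp)
    · exact ⟨hva, hvb, hvc, hab, hac, hbc, hvp, eab, ebc,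
        hno b (by simp) hab.symm, hno c (by simp) hac.symm, nac⟩
    · grind
  · refine hG.notMem_of_isP4 hP4 hv (B := {v, p, c, d}) ⟨v, p, c, d, ?_, rfl⟩ ?_ (by simp)
    · exact ⟨hvb, hvc, hvd, hbc, hbd, hcd, hvp, ebc, ecd,
        hno c (by simp) hbc.symm, hno d (by simp) hbd.symm, nbd⟩
    · grind

/-- **Observation 2.4, complement form.** If `G` is `P4`-sparse and `A`
induces a `P4`, then there are no `v ∈ T(A) ∪ P(A)` and distinct `x, y ∈ I(A)` such that the
edges of `G` among `{v, x, y}` are exactly `vy` and `xy`. -/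
theorem p4Sparse_obs_2_4_compl (G : SimpleGraph V) (hG : P4Sparse G)
    (a b c d : V) (hP4 : IsP4 G a b c d) (A : Set V) (hA : A = {a, b, c, d}) :
    ¬∃ v x y : V, x ≠ y ∧ v ∈ tSet G A ∪ pSet G A ∧ x ∈ iSet G A ∧ y ∈ iSet G A ∧
      ¬G.Adj v x ∧ G.Adj v y ∧ G.Adj x y := by
  rintro ⟨v, x, y, hxy, hv, ⟨hxA, hx⟩, ⟨hyA, hy⟩, hvx, hvy, exy⟩
  have hvA : v ∉ A := hv.elim And.left And.left
  obtain ⟨p, hpA, hvp⟩ : ∃ p ∈ A, G.Adj v p := by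
    rcases hv with hv | hv
    · exact ⟨a, by simp [hA], hv.2 a (by simp [hA])⟩
    · obtain ⟨p, hp⟩ := Set.nonempty_of_ncard_ne_zero (Nat.one_le_iff_ne_zero.mp hv.2.1)
      exact ⟨p, hp.2, hp.1⟩
  obtain ⟨q, hqA, hqp, hvq⟩ : ∃ q ∈ A, q ≠ p ∧ G.Adj v q := by
    have hrev : ({d, c, b, a} : Set V) = A := by grind
    have hcases : (p = a ∨ p = b) ∨ (p = d ∨ p = c) := by grind
    rcases hcases with hp | hp
    · exact hA ▸ hG.exists_adj_ne hP4 (hA ▸ hvA) hp hvp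
    · exact hrev ▸ hG.exists_adj_ne hP4.reverse (hrev ▸ hvA) hp hvp
  have hpath : ∀ r ∈ A, G.Adj v r → IsP4 G x y v r := fun r hr hvr =>
    ⟨hxy, fun h => hx r hr (h ▸ hvr), fun h => hxA (h ▸ hr), hvy.ne', fun h => hyA (h ▸ hr),
      hvr.ne, exy, hvy.symm, hvr, fun h => hvx h.symm, hx r hr, hy r hr⟩
  have hqmem : q ∉ ({x, y, v, p} : Set V) := by grind
  exact hG.notMem_of_isP4 (hpath p hpA hvp) hqmem ⟨x, y, v, q, hpath q hqA hvq, rfl⟩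
    (by grind) (by simp)
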